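/- arXiv:2303.16083 — 2 statements merged into one kernel-verified Lean document; each statement's English description precedes it below -/
import Mathlib

section
/- Let k be a commutative ring and A a commutative k-algebra. Make End_k(A) into a module over A ⊗_k A by ((a ⊗ b) • f)(x) = a · f(b · x), and let I_Δ ⊆ A ⊗_k A be the kernel of the multiplication map A ⊗_k A → A. Then for every n ≥ 0 and every f ∈ End_k(A): f is a differential operator of order at most n (i.e. f ∈ D^{(n)}) if and only if the ideal power I_Δ^{n+1} annihilates f, i.e. ξ • f = 0 for every ξ ∈ I_Δ^{n+1}. -/
/-!
The action map `Φ` is multiplicative, and `1 ⊗ a - a ⊗ 1` acts on `End_k(A)` as the commutator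
`f ↦ f ∘ L_a - L_a ∘ f`. The elements `1 ⊗ a - a ⊗ 1` generate `I_Δ`
(`KaehlerDifferential.span_range_eq_ideal`), so for every ideal `J` the ideal `J * I_Δ` annihilates
`f` iff `J` annihilates every commutator of `f` with an `L_a`
(`annihilated_mul_diagonalIdeal_iff`). Taking `J = I_Δ ^ n`, the theorem follows by induction on
`n`; the base case is `J = ⊤`, which annihilates only `0`.
-/

open TensorProduct

/-- `diffOpOrder k A n` is the set of Grothendieck differential operators of order at most `n`
on the commutative `k`-algebra `A`. -/
def diffOpOrder (k A : Type*) [CommRing k] [CommRing A] [Algebra k A] :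
    ℕ → Set (Module.End k A)
  | 0 => {f | ∀ a : A, f * LinearMap.mulLeft k a = LinearMap.mulLeft k a * f}
  | n + 1 => {f | ∀ a : A, f * LinearMap.mulLeft k a - LinearMap.mulLeft k a * f ∈
      diffOpOrder k A n}

/-- The ideal `I_Δ` of the diagonal: the kernel of the multiplication map `A ⊗[k] A → A`. -/
noncomputable def diagonalIdeal (k A : Type*) [CommRing k] [CommRing A] [Algebra k A] :
    Ideal (A ⊗[k] A) :=
  RingHom.ker (Algebra.TensorProduct.lmul' k : A ⊗[k] A →ₐ[k] A)

section
variable {k A : Type*} [CommRing k] [CommRing A] [Algebra k A]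
  {Φ : A ⊗[k] A →ₗ[k] Module.End k (Module.End k A)}

theorem action_mul
    (hΦ : ∀ (a b : A) (f : Module.End k A) (x : A), Φ (a ⊗ₜ[k] b) f x = a * f (b * x))
    (ξ η : A ⊗[k] A) (f : Module.End k A) : Φ (ξ * η) f = Φ ξ (Φ η f) := by
  induction ξ with
  | zero => simp
  | add x y hx hy => simp [add_mul, hx, hy]
  | tmul a b =>
    induction η with
    | zero => simp
    | add x y hx hy => simp [mul_add, hx, hy]
    | tmul c d =>
      ext x
      simp only [Algebra.TensorProduct.tmul_mul_tmul, hΦ]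
      rw [mul_assoc, mul_comm b d, mul_assoc d b x]

theorem action_one
    (hΦ : ∀ (a b : A) (f : Module.End k A) (x : A), Φ (a ⊗ₜ[k] b) f x = a * f (b * x))
    (f : Module.End k A) : Φ 1 f = f := by
  ext x
  simp [Algebra.TensorProduct.one_def, hΦ]

theorem action_diff
    (hΦ : ∀ (a b : A) (f : Module.End k A) (x : A), Φ (a ⊗ₜ[k] b) f x = a * f (b * x))
    (a : A) (f : Module.End k A) :
    Φ (1 ⊗ₜ[k] a - a ⊗ₜ[k] 1) f = f * LinearMap.mulLeft k a - LinearMap.mulLeft k a * f := by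
  ext x
  simp [hΦ]

/-- Multiplying an ideal `J` by `I_Δ` corresponds to passing from `f` to its commutators with the
multiplication operators: this is what matches `I_Δ ^ (n + 1)` with the recursive definition of
`diffOpOrder`. -/
theorem annihilated_mul_diagonalIdeal_iff
    (hΦ : ∀ (a b : A) (f : Module.End k A) (x : A), Φ (a ⊗ₜ[k] b) f x = a * f (b * x))
    (J : Ideal (A ⊗[k] A)) (f : Module.End k A) :
    (∀ ξ ∈ J * diagonalIdeal k A, Φ ξ f = 0) ↔
      ∀ a : A, ∀ ξ ∈ J, Φ ξ (f * LinearMap.mulLeft k a - LinearMap.mulLeft k a * f) = 0 := by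
  have hI : diagonalIdeal k A =
      Ideal.span (Set.range fun s : A => (1 : A) ⊗ₜ[k] s - s ⊗ₜ[k] (1 : A)) :=
    (KaehlerDifferential.span_range_eq_ideal k A).symm
  -- By multiplicativity of `Φ`, the annihilator of `f` is an ideal.
  let ann : Ideal (A ⊗[k] A) :=
    { carrier := {ξ | Φ ξ f = 0}
      zero_mem' := by simp
      add_mem' := fun {x y} hx hy => by
        simp only [Set.mem_ofPred_eq] at hx hy ⊢
        simp [hx, hy]
      smul_mem' := fun c x hx => by
        simp only [Set.mem_ofPred_eq] at hx ⊢
        rw [smul_eq_mul, action_mul hΦ, hx, map_zero] }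
  change J * diagonalIdeal k A ≤ ann ↔ _
  constructor
  · intro h a ξ hξ
    rw [← action_diff hΦ, ← action_mul hΦ]
    exact h (Ideal.mul_mem_mul hξ (hI ▸ Ideal.subset_span ⟨a, rfl⟩))
  · intro h
    refine Ideal.mul_le.2 fun ξ hξ η hη => ?_
    rw [hI] at hη
    induction hη using Submodule.span_induction with
    | mem x hx =>
      obtain ⟨a, rfl⟩ := hx
      change Φ _ f = 0
      rw [action_mul hΦ, action_diff hΦ]
      exact h a ξ hξ
    | zero => simp
    | add x y _ _ hx hy => rw [mul_add]; exact ann.add_mem hx hy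
    | smul c x _ hx => rw [mul_smul_comm]; exact ann.smul_mem c hx

end

/-- `f ∈ End_k(A)` is a differential operator of order at most `n` iff `I_Δ^{n+1}`
annihilates `f` for the `A ⊗[k] A`-module structure on `End_k(A)` determined by
`((a ⊗ b) • f) x = a * f (b * x)` (here given by the action map `Φ`). -/
theorem diffOpOrder_iff_annihilated_by_diagonal_power
    {k A : Type*} [CommRing k] [CommRing A] [Algebra k A]
    (Φ : A ⊗[k] A →ₗ[k] Module.End k (Module.End k A))
    (hΦ : ∀ (a b : A) (f : Module.End k A) (x : A), Φ (a ⊗ₜ[k] b) f x = a * f (b * x))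
    (n : ℕ) (f : Module.End k A) :
    f ∈ diffOpOrder k A n ↔ ∀ ξ ∈ diagonalIdeal k A ^ (n + 1), Φ ξ f = 0 := by
  induction n generalizing f with
  | zero =>
    rw [pow_succ, annihilated_mul_diagonalIdeal_iff hΦ]
    refine forall_congr' fun a => ?_
    rw [← sub_eq_zero]
    refine ⟨fun h ξ _ => by rw [h, map_zero], fun h => ?_⟩
    rw [← h 1 (by simp), action_one hΦ]
  | succ n ih =>
    rw [pow_succ, annihilated_mul_diagonalIdeal_iff hΦ]
    exact forall_congr' fun a => ih _
end

section
/- Let R be a commutative ring, let B be a commutative R-algebra that is projective as an R-module, and let I be an ideal of B. For an R-module M, let coind(M) denote the B-module Hom_R(B, M), with B acting by (b • f)(x) = f(b·x). Suppose that the first local cohomology module H¹_I(coind(M)) vanishes for every R-module M. Then Hⁱ_I(coind(M)) = 0 for every i ≥ 1 and every R-module M. -/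
/-!
The `B`-linear maps `X → Hom_R(B, M)` are the `R`-linear maps `X → M` (`coindLift`, `coindEval`), and
a `B`-projective resolution is also `R`-projective because `B` is (`projective_trans`). So
`Ext_B(B/I^a, coind M)` is computed by `R`-linear cochains on a `B`-projective resolution `Q` of
`B/I^a`.

The vanishing of `H¹` is used for a single module: the first syzygy `K = im (Q₁ → Q₀)` of `B/I^a`.
The differential `Q₁ → K` represents a class in `Ext¹(B/I^a, coind K)`, which dies in
`Ext¹(B/I^b, coind K)` for some `b`. Let `P` be a resolution of `B/I^b` and `g : P → Q` a lift of
`B/I^b → B/I^a`. Then `d ∘ g₁ = w ∘ d` for some `R`-linear `w : P₀ → K` (equivalently,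
`B/I^b → B/I^a` factors over `R` through a projective module). Lifting `w` along `Q₁ → K` and
continuing upwards gives `R`-linear maps `h : Pₙ → Qₙ₊₁` with `gₙ₊₁ - h ∘ d` valued in cycles, hence
in boundaries (`exists_partial_homotopy`). Every `R`-linear cocycle `y` on `Qₙ₊₁` then satisfies
`y ∘ g = y ∘ h ∘ d`, so the transition map is zero on `Ext^{n+1}(-, coind M)` for all `n` and `M` at
once (`exists_transition_eq_zero`). Since every stage of the colimit admits such a transition map,
all higher local cohomology of coinduced modules vanishes.
-/

section Coind

variable (R B M : Type) [CommRing R] [CommRing B] [Algebra R B] [AddCommGroup M] [Module R M]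

/-- The coinduced `B`-module structure on `Hom_R(B, M)`, with `B` acting on the domain:
`(b • f) x = f (b * x)`. -/
noncomputable instance coindModule : Module B (B →ₗ[R] M) where
  smul b f := f.comp (LinearMap.mulLeft R b)
  one_smul f := by
    ext x
    show f (1 * x) = f x
    rw [one_mul]
  mul_smul b c f := by
    ext x
    show f (b * c * x) = f (c * (b * x))
    congr 1
    ring
  smul_zero b := by ext x; rfl
  smul_add b f g := by ext x; rfl
  add_smul b c f := by
    ext x
    show f ((b + c) * x) = f (b * x) + f (c * x)
    rw [add_mul, map_add]
  zero_smul f := by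
    ext x
    show f (0 * x) = 0
    rw [zero_mul, map_zero]

variable {R B M} in
@[simp] theorem coind_smul_apply (b : B) (f : B →ₗ[R] M) (x : B) :
    (b • f) x = f (b * x) := rfl

end Coind

namespace LCC

open CategoryTheory Limits Opposite

open Classical in
/-- Transitivity of projectivity: a projective `B`-module is a direct summand of copies of the
projective `R`-module `B`. -/
theorem projective_trans (R B P : Type) [CommRing R] [CommRing B] [Algebra R B] [AddCommGroup P]
    [Module R P] [Module B P] [IsScalarTower R B P] [Module.Projective R B]
    [hP : Module.Projective B P] : Module.Projective R P := by
  obtain ⟨s, hs⟩ := hP.out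
  have := Module.Projective.of_equiv' (finsuppLEquivDirectSum R B P).symm
  exact Module.Projective.of_split (M := P →₀ B) (s.restrictScalars R)
    ((Finsupp.linearCombination B id).restrictScalars R) (LinearMap.ext hs)

section
variable {B : Type} [CommRing B]

/-- A map of cochain complexes that sends every cocycle to a coboundary is zero on cohomology. -/
theorem homologyMap_eq_zero {K L : CochainComplex (ModuleCat.{0} B) ℕ} (φ : K ⟶ L) (j : ℕ)
    (h : ∀ z : K.X (j + 1), K.d (j + 1) (j + 2) z = 0 →
      ∃ w : L.X j, L.d j (j + 1) w = φ.f (j + 1) z) :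
    HomologicalComplex.homologyMap φ (j + 1) = 0 := by
  rw [← cancel_epi (K.homologyπ (j + 1))]
  ext c
  obtain ⟨w, hw⟩ := h (K.iCycles (j + 1) c) (by
    rw [← ConcreteCategory.comp_apply, K.iCycles_d]; rfl)
  have e : HomologicalComplex.cyclesMap φ (j + 1) c = L.toCycles j (j + 1) w := by
    apply (ModuleCat.mono_iff_injective (L.iCycles (j + 1))).1 inferInstance
    simp only [← ConcreteCategory.comp_apply, HomologicalComplex.cyclesMap_i,
      HomologicalComplex.toCycles_i]
    rw [hw]; rfl
  rw [HomologicalComplex.homologyπ_naturality, comp_zero]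
  refine (congrArg (L.homologyπ (j + 1)) e).trans ?_
  rw [← ConcreteCategory.comp_apply, L.toCycles_comp_homologyπ]
  rfl

/-- The cohomology class `x` of a cocycle `z`: if a map of complexes kills `x`, it sends `z` to a
coboundary. -/
theorem exists_homology_class (K : CochainComplex (ModuleCat.{0} B) ℕ) (j : ℕ)
    (z : K.X (j + 1)) (hz : K.d (j + 1) (j + 2) z = 0) :
    ∃ x : K.homology (j + 1), ∀ (L : CochainComplex (ModuleCat.{0} B) ℕ) (φ : K ⟶ L),
      HomologicalComplex.homologyMap φ (j + 1) x = 0 →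
      ∃ w : L.X j, L.d j (j + 1) w = φ.f (j + 1) z := by
  obtain ⟨c, hc⟩ : ∃ c : K.cycles (j + 1), K.iCycles (j + 1) c = z := by
    let k : ModuleCat.of B B ⟶ K.X (j + 1) := ModuleCat.ofHom (LinearMap.toSpanSingleton B _ z)
    have hk : k ≫ K.d (j + 1) (j + 2) = 0 := by
      ext
      simpa [k] using hz
    refine ⟨K.liftCycles k (j + 2) (by simp) hk (1 : B), ?_⟩
    rw [← ConcreteCategory.comp_apply, K.liftCycles_i]
    simp [k]
  refine ⟨K.homologyπ (j + 1) c, fun L φ h ↦ ?_⟩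
  rw [← ConcreteCategory.comp_apply, HomologicalComplex.homologyπ_naturality,
    ConcreteCategory.comp_apply] at h
  have hex := ShortComplex.exact_of_g_is_cokernel (ShortComplex.mk _ _
    (L.toCycles_comp_homologyπ j (j + 1))) (L.homologyIsCokernel j (j + 1) (by simp))
  obtain ⟨w, hw⟩ := (ShortComplex.moduleCat_exact_iff _).1 hex _ h
  refine ⟨w, ?_⟩
  rw [← L.toCycles_i, ConcreteCategory.comp_apply]
  dsimp at hw
  rw [hw, ← ConcreteCategory.comp_apply, HomologicalComplex.cyclesMap_i,
    ConcreteCategory.comp_apply, hc]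
end

section
variable {B : Type} [CommRing B] {A C : ModuleCat.{0} B}

/-- Horizontal pasting of two commutative squares. -/
theorem paste {V : Type*} [Category V] {X₁ X₂ X₃ Y₁ Y₂ Y₃ : V} {a : X₁ ⟶ X₂} {b : X₂ ⟶ X₃}
    {a' : Y₁ ⟶ Y₂} {b' : Y₂ ⟶ Y₃} {r : X₁ ⟶ Y₁} {m : X₂ ⟶ Y₂} {t : X₃ ⟶ Y₃}
    (h1 : b ≫ t = m ≫ b') (h2 : a ≫ m = r ≫ a') : (a ≫ b) ≫ t = r ≫ a' ≫ b' := by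
  rw [Category.assoc, h1, reassoc_of% h2]

/-- The map of cochain complexes `Hom_B(Q, N) ⟶ Hom_B(P, N)` given by precomposition with a chain
map `g : P ⟶ Q`. It is built from `unopFunctor`, in the way `linearYonedaObj` itself is, so that the
naturality of the comparison with `Ext` applies to it directly. -/
noncomputable def precomp (N : ModuleCat.{0} B) {P Q : ChainComplex (ModuleCat.{0} B) ℕ}
    (g : P ⟶ Q) : Q.linearYonedaObj B N ⟶ P.linearYonedaObj B N :=
  (HomologicalComplex.unopFunctor _ _).map
    ((((linearYoneda B (ModuleCat.{0} B)).obj N).rightOp.mapHomologicalComplex _).map g).op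

/-- `isoExt` is natural in the first variable: on projective resolutions, `Ext` of `f` is
precomposition with a chain map lifting `f`. -/
theorem ext_map_isoExt (N : ModuleCat.{0} B) (f : A ⟶ C) (P : ProjectiveResolution A)
    (Q : ProjectiveResolution C) (g : P.complex ⟶ Q.complex)
    (comm : g.f 0 ≫ Q.π.f 0 = P.π.f 0 ≫ f) (n : ℕ) :
    (Q.isoExt (R := B) n N).inv ≫ ((Ext B (ModuleCat.{0} B) n).map f.op).app N =
      HomologicalComplex.homologyMap (precomp N g) n ≫ (P.isoExt n N).inv := by
  have h1 := congrArg Quiver.Hom.unop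
    (ProjectiveResolution.isoLeftDerivedObj_hom_naturality f P Q g comm
      ((linearYoneda B (ModuleCat.{0} B)).obj N).rightOp n)
  have h2 := congrArg Quiver.Hom.unop (HomologicalComplex.homologyOp_hom_naturality (precomp N g) n)
  have e1 : (Q.isoExt (R := B) n N).inv =
    (HomologicalComplex.homologyUnop _ _).hom ≫ (Q.isoLeftDerivedObj
      ((linearYoneda B (ModuleCat.{0} B)).obj N).rightOp n).hom.unop := rfl
  have e2 : (P.isoExt (R := B) n N).inv =
    (HomologicalComplex.homologyUnop _ _).hom ≫ (P.isoLeftDerivedObj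
      ((linearYoneda B (ModuleCat.{0} B)).obj N).rightOp n).hom.unop := rfl
  rw [e1, e2]
  exact paste h1 h2

/-- `f : A ⟶ C` acts as zero on `Ext^{n+1}(-, N)` as soon as precomposition with a lift of `f` to
resolutions sends cocycles to coboundaries. -/
theorem ext_map_eq_zero (N : ModuleCat.{0} B) (f : A ⟶ C) (P : ProjectiveResolution A)
    (Q : ProjectiveResolution C) (g : P.complex ⟶ Q.complex)
    (comm : g.f 0 ≫ Q.π.f 0 = P.π.f 0 ≫ f) (n : ℕ)
    (h : ∀ z : Q.complex.X (n + 1) ⟶ N, Q.complex.d (n + 2) (n + 1) ≫ z = 0 →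
      ∃ w : P.complex.X n ⟶ N, P.complex.d (n + 1) n ≫ w = g.f (n + 1) ≫ z) :
    ((Ext B (ModuleCat.{0} B) (n + 1)).map f.op).app N = 0 := by
  have hz : HomologicalComplex.homologyMap (precomp N g) (n + 1) = 0 :=
    homologyMap_eq_zero (precomp N g) n h
  rw [← cancel_epi (Q.isoExt (R := B) (n + 1) N).inv, ext_map_isoExt N f P Q g comm, hz,
    zero_comp, comp_zero]

/-- The class in `Ext^{n+1}(C, N)` of a cocycle `z`. It is chosen before `f : A ⟶ C`, which is needed
to apply it to a transition map that depends on the class. -/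
theorem exists_ext_class (N : ModuleCat.{0} B) (Q : ProjectiveResolution C) (n : ℕ)
    (z : Q.complex.X (n + 1) ⟶ N) (hz : Q.complex.d (n + 2) (n + 1) ≫ z = 0) :
    ∃ x : ((Ext B (ModuleCat.{0} B) (n + 1)).obj (op C)).obj N,
      ∀ (A : ModuleCat.{0} B) (f : A ⟶ C) (P : ProjectiveResolution A)
        (g : P.complex ⟶ Q.complex), g.f 0 ≫ Q.π.f 0 = P.π.f 0 ≫ f →
        ((Ext B (ModuleCat.{0} B) (n + 1)).map f.op).app N x = 0 →
        ∃ w : P.complex.X n ⟶ N, P.complex.d (n + 1) n ≫ w = g.f (n + 1) ≫ z := by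
  obtain ⟨y, hy⟩ := exists_homology_class (Q.complex.linearYonedaObj B N) n z hz
  refine ⟨(Q.isoExt (R := B) (n + 1) N).inv y, fun A f P g comm hx ↦ hy _ (precomp N g) ?_⟩
  rw [← ConcreteCategory.comp_apply, ext_map_isoExt N f P Q g comm,
    ConcreteCategory.comp_apply] at hx
  apply (ModuleCat.mono_iff_injective (P.isoExt (R := B) (n + 1) N).inv).1 inferInstance
  rw [hx, map_zero]
end

section
variable {R B M X : Type} [CommRing R] [CommRing B] [Algebra R B] [AddCommGroup M] [Module R M]
  [AddCommGroup X] [Module R X] [Module B X] [IsScalarTower R B X]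

/-- The universal property of coinduction: the `B`-linear map `x ↦ (b ↦ φ (b • x))` into
`Hom_R(B, M)` attached to an `R`-linear map `φ : X → M`. -/
noncomputable def coindLift (φ : X →ₗ[R] M) : X →ₗ[B] (B →ₗ[R] M) where
  toFun x := φ ∘ₗ (LinearMap.toSpanSingleton B X x).restrictScalars R
  map_add' x y := by ext b; simp
  map_smul' c x := by ext b; simp [mul_smul, smul_comm b c x]

@[simp] theorem coindLift_apply (φ : X →ₗ[R] M) (x : X) (b : B) :
    coindLift φ x b = φ (b • x) := rfl

/-- The `R`-linear map `x ↦ z x 1` attached to a `B`-linear map `z : X → Hom_R(B, M)`, inverse to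
`coindLift`. -/
noncomputable def coindEval (z : X →ₗ[B] (B →ₗ[R] M)) : X →ₗ[R] M where
  toFun x := z x 1
  map_add' x y := by simp
  map_smul' r x := by
    rw [← algebraMap_smul B r x, map_smul, coind_smul_apply, ← Algebra.smul_def, map_smul]
    rfl

@[simp] theorem coindEval_apply (z : X →ₗ[B] (B →ₗ[R] M)) (x : X) : coindEval z x = z x 1 := rfl
end

/-- Let `g : P → Q` be a chain map from a complex of projectives to a complex exact in positive
degrees. If `d ∘ h ∘ d = d ∘ g₁` for some `h : P₀ → Q₁`, then in every degree there is
`h : Pₙ → Qₙ₊₁` such that `gₙ₊₁ - h ∘ d` takes values in cycles. -/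
theorem exists_partial_homotopy {R : Type} [CommRing R] {P Q : ℕ → Type}
    [∀ n, AddCommGroup (P n)] [∀ n, Module R (P n)] [∀ n, AddCommGroup (Q n)]
    [∀ n, Module R (Q n)] [∀ n, Module.Projective R (P n)]
    (dP : ∀ n, P (n + 1) →ₗ[R] P n) (dQ : ∀ n, Q (n + 1) →ₗ[R] Q n) (g : ∀ n, P n →ₗ[R] Q n)
    (hP : ∀ n x, dP n (dP (n + 1) x) = 0)
    (hQQ : ∀ n x, dQ n (dQ (n + 1) x) = 0)
    (hQ : ∀ n y, dQ n y = 0 → ∃ x, dQ (n + 1) x = y)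
    (hg : ∀ n x, dQ n (g (n + 1) x) = g n (dP n x))
    (h₀ : ∃ h : P 0 →ₗ[R] Q 1, ∀ x, dQ 0 (g 1 x - h (dP 0 x)) = 0) (n : ℕ) :
    ∃ h : P n →ₗ[R] Q (n + 1), ∀ x, dQ n (g (n + 1) x - h (dP n x)) = 0 := by
  induction n with
  | zero => exact h₀
  | succ n ih =>
    obtain ⟨h, hh⟩ := ih
    -- `g - h ∘ d` maps into the cycles of `Q`, so it lifts along `dQ (n + 1)`;
    -- the lift is the next component.
    let e : P (n + 1) →ₗ[R] LinearMap.ker (dQ n) :=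
      (g (n + 1) - h ∘ₗ dP n).codRestrict _ hh
    let p : Q (n + 2) →ₗ[R] LinearMap.ker (dQ n) :=
      (dQ (n + 1)).codRestrict _ (hQQ n)
    obtain ⟨h', hh'⟩ := Module.projective_lifting_property p e
      (fun y ↦ (hQ n y y.2).imp fun x hx ↦ Subtype.ext hx)
    refine ⟨h', fun x ↦ ?_⟩
    have := congr(($hh' (dP (n + 1) x) : Q (n + 1)))
    replace this : dQ (n + 1) (h' (dP (n + 1) x)) =
      g (n + 1) (dP (n + 1) x) - h (dP n (dP (n + 1) x)) := this
    rw [map_sub, hg, this, hP, map_zero, sub_zero, sub_self]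

/-- Local cohomology is a filtered colimit, so it vanishes exactly when every element of every term
is killed by some transition map. -/
theorem subsingleton_localCohomology_iff {B : Type} [CommRing B] (I : Ideal B) (i : ℕ)
    (N : ModuleCat.{0} B) :
    Subsingleton ((localCohomology I i).obj N) ↔
      ∀ (j : ℕᵒᵖᵒᵖ) (x : ((localCohomology.diagram
        (localCohomology.idealPowersDiagram I) i).obj j).obj N),
        ∃ (k : ℕᵒᵖᵒᵖ) (u : j ⟶ k), ((localCohomology.diagram
          (localCohomology.idealPowersDiagram I) i).map u).app N x = 0 := by
  let D := localCohomology.diagram (localCohomology.idealPowersDiagram I) i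
  let hD : IsColimit (((evaluation _ _).obj N).mapCocone (colimit.cocone D)) :=
    isColimitOfPreserves _ (colimit.isColimit D)
  constructor
  · intro h j x
    obtain ⟨k, u, v, huv⟩ := Concrete.isColimit_exists_of_rep_eq _ hD x (0 : (D.obj j).obj N)
      (@Subsingleton.elim _ h _ _)
    exact ⟨k, u, huv.trans (map_zero ((D.map v).app N).hom)⟩
  · intro h
    have key : ∀ y : (localCohomology I i).obj N, y = 0 := by
      intro y
      obtain ⟨j, x, hx⟩ := Concrete.isColimit_exists_rep _ hD y
      obtain ⟨k, u, hu⟩ := h j x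
      have := congr($((((evaluation _ _).obj N).mapCocone (colimit.cocone D)).w u) x)
      refine hx.symm.trans (this.symm.trans ?_)
      rw [ConcreteCategory.comp_apply]
      refine (congrArg _ hu).trans ?_
      exact map_zero _
    exact ⟨fun a b ↦ (key a).trans (key b).symm⟩

/-- Under the hypothesis on `H¹`, every `B/I^a` receives a transition map from some `B/I^b` that
acts as zero on `Ext^{n+1}(-, coind M)`, simultaneously for all `n` and `M`. -/
theorem exists_transition_eq_zero {R B : Type} [CommRing R] [CommRing B] [Algebra R B]
    [Module.Projective R B] (I : Ideal B)
    (h1 : ∀ (M : Type) [AddCommGroup M] [Module R M],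
      Subsingleton ((localCohomology I 1).obj (ModuleCat.of B (B →ₗ[R] M)))) (j : ℕᵒᵖᵒᵖ) :
    ∃ (k : ℕᵒᵖᵒᵖ) (u : j ⟶ k), ∀ (n : ℕ) (M : Type) [AddCommGroup M] [Module R M],
      ((localCohomology.diagram (localCohomology.idealPowersDiagram I) (n + 1)).map u).app
        (ModuleCat.of B (B →ₗ[R] M)) = 0 := by
  let D := localCohomology.ringModIdeals (localCohomology.idealPowersDiagram I)
  let Q := projectiveResolution (D.obj j.unop)
  let (X : ModuleCat.{0} B) : Module R X := Module.compHom X (algebraMap R B)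
  have (X : ModuleCat.{0} B) : IsScalarTower R B X :=
    ⟨fun r b x ↦ by rw [Algebra.smul_def, mul_smul]; rfl⟩
  have hdd (S : ChainComplex (ModuleCat.{0} B) ℕ) (n : ℕ) (x : S.X (n + 2)) :
      S.d (n + 1) n (S.d (n + 2) (n + 1) x) = 0 := by
    rw [← ConcreteCategory.comp_apply, S.d_comp_d]; rfl
  let dQ (n : ℕ) : Q.complex.X (n + 1) →ₗ[R] Q.complex.X n :=
    (Q.complex.d (n + 1) n).hom.restrictScalars R
  -- `K` is the first syzygy of `B/I^a`, and `z` is the cocycle adjoint to `d : Q₁ → K`.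
  let K := LinearMap.range (dQ 0)
  let z : Q.complex.X 1 ⟶ ModuleCat.of B (B →ₗ[R] K) :=
    ModuleCat.ofHom (coindLift (dQ 0).rangeRestrict)
  have hz : Q.complex.d 2 1 ≫ z = 0 := by
    ext x b
    refine (congrArg Subtype.val (coindLift_apply _ _ _)).trans ?_
    change Q.complex.d 1 0 (b • Q.complex.d 2 1 x) = 0
    rw [map_smul, hdd, smul_zero]
  obtain ⟨x, hx⟩ := exists_ext_class _ Q 0 z hz
  obtain ⟨k, u, hu⟩ := (subsingleton_localCohomology_iff I 1 _).1 (h1 K) j x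
  refine ⟨k, u, fun n M _ _ ↦ ?_⟩
  let f : D.obj k.unop ⟶ D.obj j.unop := D.map u.unop
  let P := projectiveResolution (D.obj k.unop)
  let g := ProjectiveResolution.lift f P Q
  have comm : g.f 0 ≫ Q.π.f 0 = P.π.f 0 ≫ f := ProjectiveResolution.lift_commutes_zero f P Q
  obtain ⟨w, hw⟩ := hx _ f P g comm hu
  have (n : ℕ) : Module.Projective R (P.complex.X n) :=
    have := (IsProjective.iff_projective (R := B) (P.complex.X n)).2 (P.projective n)
    projective_trans R B (P.complex.X n)
  let dP (n : ℕ) : P.complex.X (n + 1) →ₗ[R] P.complex.X n :=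
    (P.complex.d (n + 1) n).hom.restrictScalars R
  have hg (n : ℕ) (x : P.complex.X (n + 1)) :
      Q.complex.d (n + 1) n (g.f (n + 1) x) = g.f n (P.complex.d (n + 1) n x) :=
    congr($(g.comm (n + 1) n) x)
  have hQ (n : ℕ) (y : Q.complex.X (n + 1)) (hy : dQ n y = 0) : ∃ x, dQ (n + 1) x = y :=
    (ShortComplex.moduleCat_exact_iff _).1 (Q.exact_succ n) y hy
  -- Lifting the adjoint `P₀ → K` of `w` along `d : Q₁ → K` starts the homotopy.
  have h₀ : ∃ h : P.complex.X 0 →ₗ[R] Q.complex.X 1, ∀ x, dQ 0 (g.f 1 x - h (dP 0 x)) = 0 := by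
    obtain ⟨h, hh⟩ := Module.projective_lifting_property (dQ 0).rangeRestrict (coindEval w.hom)
      (dQ 0).surjective_rangeRestrict
    refine ⟨h, fun x ↦ ?_⟩
    have e1 : dQ 0 (h (dP 0 x)) = (w.hom (dP 0 x) 1 : K) := congr(($hh (dP 0 x) : K))
    have e2 : w.hom (dP 0 x) = z.hom (g.f 1 x) := congr($hw x)
    rw [map_sub, e1, e2]
    change _ - dQ 0 ((1 : B) • g.f 1 x) = 0
    rw [one_smul, sub_self]
  refine ext_map_eq_zero _ f P Q g comm n fun y hy ↦ ?_
  obtain ⟨h, hh⟩ := exists_partial_homotopy dP dQ (fun n ↦ (g.f n).hom.restrictScalars R)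
    (hdd _) (hdd _) hQ hg h₀ n
  -- By adjunction `y` is an `R`-linear cocycle, so `y ∘ g = y ∘ h ∘ d` is a coboundary.
  refine ⟨ModuleCat.ofHom (coindLift (coindEval y.hom ∘ₗ h)), ?_⟩
  ext x b
  change y.hom (h (b • P.complex.d (n + 1) n x)) 1 = y.hom (g.f (n + 1) x) b
  obtain ⟨q, hq⟩ := hQ n _ (hh (b • x))
  have e : y.hom (dQ (n + 1) q) = 0 := congr($hy q)
  rw [hq, map_sub, sub_eq_zero] at e
  have e' : y.hom (g.f (n + 1) (b • x)) = y.hom (h (P.complex.d (n + 1) n (b • x))) := e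
  rw [← map_smul, ← e', map_smul, map_smul, coind_smul_apply, mul_one]

end LCC

/-- Let `B` be a commutative `R`-algebra which is projective as an `R`-module and `I ⊆ B` an
ideal.  If the first local cohomology `H¹_I(Hom_R(B, M))` of every coinduced module vanishes,
then `Hⁱ_I(Hom_R(B, M)) = 0` for every `i ≥ 1` and every `R`-module `M`. -/
theorem localCohomology_coind_vanishes
    (R B : Type) [CommRing R] [CommRing B] [Algebra R B]
    (hproj : Module.Projective R B) (I : Ideal B)
    (h1 : ∀ (M : Type) [AddCommGroup M] [Module R M],
      Subsingleton ((localCohomology I 1).obj (ModuleCat.of B (B →ₗ[R] M))))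
    (i : ℕ) (hi : 1 ≤ i) (M : Type) [AddCommGroup M] [Module R M] :
    Subsingleton ((localCohomology I i).obj (ModuleCat.of B (B →ₗ[R] M))) := by
  obtain ⟨n, rfl⟩ := Nat.exists_eq_add_of_le' hi
  refine (LCC.subsingleton_localCohomology_iff I (n + 1) _).2 fun j x ↦ ?_
  obtain ⟨k, u, hu⟩ := LCC.exists_transition_eq_zero I h1 j
  exact ⟨k, u, by rw [hu n M]; rfl⟩
end
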